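/- The blob K-matrix K(u) := Id − (μ/(sinh(h) sinh(hα))) · (sinh(u − hα) sinh(u) · Id + sinh(hα) sinh(2u) · b) solves the boundary Yang–Baxter (reflection) equation: for all u, v ∈ ℂ, R_{ab}(u−v) K_a(u) R_{ba}(u+v) K_b(v) = K_b(v) R_{ab}(u+v) K_a(u) R_{ba}(u−v) as operators on ℂ²_a ⊗ ℂ²_b ⊗ V_α. -/

import Mathlib

noncomputable section

/-- The Verma module `V_α`: finitely supported complex sequences, basis `|n⟩`. -/
abbrev Verma : Type := ℕ →₀ ℂ

/-- The basis vector `|n⟩`. -/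
noncomputable def ket (n : ℕ) : Verma := Finsupp.single n 1

/-- The linear operator on `Verma` determined by its values on the basis vectors. -/
noncomputable def ladderOp (t : ℕ → Verma) : Module.End ℂ Verma :=
  Finsupp.lsum ℂ fun n => LinearMap.toSpanSingleton ℂ Verma (t n)

/-- The q-deformed number `[x]_q` with `q = e^h`. -/
noncomputable def qnum (h x : ℂ) : ℂ :=
  (Complex.exp (h * x) - Complex.exp (-(h * x))) / (Complex.exp h - Complex.exp (-h))

/-- `E |n⟩ = [n]_q [α−n]_q |n−1⟩`, `E |0⟩ = 0`. -/
noncomputable def Eop (h α : ℂ) : Module.End ℂ Verma :=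
  ladderOp fun n => if n = 0 then 0 else (qnum h n * qnum h (α - n)) • ket (n - 1)

/-- `F |n⟩ = |n+1⟩`. -/
noncomputable def Fop : Module.End ℂ Verma := ladderOp fun n => ket (n + 1)

/-- `K |n⟩ = q^{α−1−2n} |n⟩`. -/
noncomputable def Kop (h α : ℂ) : Module.End ℂ Verma :=
  ladderOp fun n => Complex.exp (h * (α - 1 - 2 * n)) • ket n

/-- `K⁻¹ |n⟩ = q^{−(α−1−2n)} |n⟩`. -/
noncomputable def Kinv (h α : ℂ) : Module.End ℂ Verma :=
  ladderOp fun n => Complex.exp (-(h * (α - 1 - 2 * n))) • ket n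

/-- Operators on `V_α ⊗ ℂ²` as 2×2 matrices with entries in `End(V_α)`. -/
abbrev Op2 : Type := Matrix (Fin 2) (Fin 2) (Module.End ℂ Verma)

/-- The boundary projector `b` on `V_α ⊗ ℂ²`. -/
noncomputable def bPlus (h α : ℂ) : Op2 :=
  (Complex.exp (h * α) - Complex.exp (-(h * α)))⁻¹ •
    !![(-Complex.exp (-h)) • Kinv h α + Complex.exp (h * α) • 1,
        (Complex.exp h - Complex.exp (-h)) • Fop;
        (Complex.exp h * (Complex.exp h - Complex.exp (-h))) • (Kinv h α * Eop h α),
        Complex.exp h • Kinv h α - Complex.exp (-(h * α)) • 1]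

/-- The blob K-matrix `K(u)` on `V_α ⊗ ℂ²`. -/
noncomputable def Kblob (h α μ u : ℂ) : Op2 :=
  1 - (μ / (Complex.sinh h * Complex.sinh (h * α))) •
    ((Complex.sinh (u - h * α) * Complex.sinh u) • (1 : Op2)
      + (Complex.sinh (h * α) * Complex.sinh (2 * u)) • bPlus h α)

/-- The scalar trigonometric R-matrix on `ℂ² ⊗ ℂ²` (ordered basis ↑↑, ↑↓, ↓↑, ↓↓). -/
noncomputable def Rsc (h w : ℂ) : Matrix (Fin 2 × Fin 2) (Fin 2 × Fin 2) ℂ :=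
  Matrix.of fun p r =>
    if p = r then (if p.1 = p.2 then Complex.sinh (w + h) else Complex.sinh w)
    else if p = ((0 : Fin 2), (1 : Fin 2)) ∧ r = ((1 : Fin 2), (0 : Fin 2)) then
      Complex.sinh h * Complex.exp w
    else if p = ((1 : Fin 2), (0 : Fin 2)) ∧ r = ((0 : Fin 2), (1 : Fin 2)) then
      Complex.sinh h * Complex.exp (-w)
    else 0

/-- Operators on `ℂ²_a ⊗ ℂ²_b ⊗ V_α`, as matrices with entries in `End(V_α)` indexed by
pairs (state of `ℂ²_a`, state of `ℂ²_b`). -/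
abbrev Op4 : Type := Matrix (Fin 2 × Fin 2) (Fin 2 × Fin 2) (Module.End ℂ Verma)

/-- `R_{ab}(w)`: the R-matrix on the two `ℂ²` factors, identity on `V_α`. -/
noncomputable def Rab (h w : ℂ) : Op4 :=
  Matrix.of fun p r => Rsc h w p r • (1 : Module.End ℂ Verma)

/-- `R_{ba}(w) = P R(w) P`: the R-matrix with the two `ℂ²` factors swapped. -/
noncomputable def Rba (h w : ℂ) : Op4 :=
  Matrix.of fun p r => Rsc h w p.swap r.swap • (1 : Module.End ℂ Verma)

/-- `K_a(u)`: the K-matrix acting on `V_α` and `ℂ²_a`, identity on `ℂ²_b`. -/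
noncomputable def Ka (h α μ u : ℂ) : Op4 :=
  Matrix.of fun p r => if p.2 = r.2 then Kblob h α μ u p.1 r.1 else 0

/-- `K_b(v)`: the K-matrix acting on `V_α` and `ℂ²_b`, identity on `ℂ²_a`. -/
noncomputable def Kb (h α μ v : ℂ) : Op4 :=
  Matrix.of fun p r => if p.1 = r.1 then Kblob h α μ v p.2 r.2 else 0

/-!
With `P` the flip of the two copies of `ℂ²`, one has `R_{ab}(w) = P Ř(w)`, `R_{ba}(w) = Ř(w) P` and
`K_b = P K_a P`, where `Ř(w) = sinh(w + h) - sinh(w) e` with `e` the Temperley–Lieb generator. The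
flips cancel and leave the braid form `Ř(u - v) K(u) Ř(u + v) K(v) = K(v) Ř(u + v) K(u) Ř(u - v)`,
an identity in the algebra generated by `e` and `b`. That algebra is the blob algebra:
`e² = 2 cosh(h) e`; `b² = b`, because the Casimir element of `U_q(sl₂)` acts on the Verma module by
a scalar; and `e b e = (sinh(hα + h) / sinh(hα)) e`, because sandwiching `b` between two copies of
`e` produces its quantum trace, in which `K⁻¹` cancels. The two sides of the braid form are reversed
words of each other, so the equation reduces to the vanishing of the coefficient of `e b - b e`,
which is an identity between hyperbolic functions.
-/

open Complex Matrix

section BlobAlgebra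

variable {R A : Type*} [CommRing R] [Ring A] [Algebra R A]

lemma reflection_of_coeff_eq_zero {e b : A} {δ y : R} (he : e * e = δ • e)
    (hb : IsIdempotentElem b) (hebe : e * b * e = y • e) {x s x' s' k l k' l' : R}
    (hcoeff : s * x' * (k * l' + l * l' + l * k') + s * s' * l' * (δ * k + y * l)
      + x * s' * (k * l' - l * k') = 0) :
    (x • 1 + s • e) * (k • 1 + l • b) * (x' • 1 + s' • e) * (k' • 1 + l' • b)
      = (k' • 1 + l' • b) * (x' • 1 + s' • e) * (k • 1 + l • b) * (x • 1 + s • e) := by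
  have hbeb : b * e * b * e = y • (b * e) := by
    rw [mul_assoc b, mul_assoc b, hebe, mul_smul_comm]
  have hbee : b * e * e = δ • (b * e) := by rw [mul_assoc, he, mul_smul_comm]
  have hebb : e * b * b = e * b := by rw [mul_assoc, hb.eq]
  simp only [mul_add, add_mul, smul_mul_assoc, mul_smul_comm, one_mul, mul_one,
    he, hb.eq, hebe, hbeb, hbee, hebb]
  linear_combination (norm := module) hcoeff • (e * b - b * e)

end BlobAlgebra

section HyperbolicReflection

variable {A : Type*} [Ring A] [Algebra ℂ A]

/-- The Baxterized Temperley–Lieb generator `sinh(w + h) - sinh(w) e`, i.e. the braid form of the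
R-matrix when `e` is the Temperley–Lieb generator of loop weight `2 cosh h`. -/
def baxterizedR (h w : ℂ) (e : A) : A :=
  sinh (w + h) • 1 - sinh w • e

/-- The Baxterized blob generator
`1 - m (sinh(u - ω) sinh(u) + sinh(ω) sinh(2u) b)`; the blob K-matrix is the case `ω = hα`,
`m = μ / (sinh(h) sinh(hα))`. -/
def baxterizedK (m ω u : ℂ) (b : A) : A :=
  1 - m • ((sinh (u - ω) * sinh u) • 1 + (sinh ω * sinh (2 * u)) • b)

lemma hyperbolic_reflection_identity (h m ω u v : ℂ) :
    sinh (u - v) * sinh (u + v + h) *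
        ((1 - m * (sinh (u - ω) * sinh u)) * sinh (2 * v)
          - m * (sinh ω * sinh (2 * u) * sinh (2 * v))
          + sinh (2 * u) * (1 - m * (sinh (v - ω) * sinh v)))
      - sinh (u - v) * sinh (u + v) * sinh (2 * v) *
        (2 * cosh h * (1 - m * (sinh (u - ω) * sinh u)) - m * (sinh (ω + h) * sinh (2 * u)))
      + sinh (u - v + h) * sinh (u + v) *
        ((1 - m * (sinh (u - ω) * sinh u)) * sinh (2 * v)
          - sinh (2 * u) * (1 - m * (sinh (v - ω) * sinh v))) = 0 := by
  simp only [sinh, cosh, two_mul, neg_add, neg_sub, exp_add, exp_sub, exp_neg]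
  field_simp
  ring

theorem baxterized_reflection {h ω : ℂ} (hω : sinh ω ≠ 0) {e b : A}
    (he : e * e = (2 * cosh h) • e) (hb : IsIdempotentElem b)
    (hebe : e * b * e = (sinh (ω + h) / sinh ω) • e) (m u v : ℂ) :
    baxterizedR h (u - v) e * baxterizedK m ω u b * baxterizedR h (u + v) e * baxterizedK m ω v b
      = baxterizedK m ω v b * baxterizedR h (u + v) e * baxterizedK m ω u b *
        baxterizedR h (u - v) e := by
  have hR (w : ℂ) : baxterizedR h w e = sinh (w + h) • 1 + (-sinh w) • e := by
    unfold baxterizedR; module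
  have hK (z : ℂ) : baxterizedK m ω z b
      = (1 - m * (sinh (z - ω) * sinh z)) • 1 + (-(m * (sinh ω * sinh (2 * z)))) • b := by
    unfold baxterizedK; module
  have hy : sinh (ω + h) / sinh ω * sinh ω = sinh (ω + h) := div_mul_cancel₀ _ hω
  simp only [hR, hK]
  refine reflection_of_coeff_eq_zero he hb hebe ?_
  linear_combination m * sinh ω * hyperbolic_reflection_identity h m ω u v
    + sinh (u - v) * sinh (u + v) * (m * sinh ω * sinh (2 * v)) * (m * sinh (2 * u)) * hy

end HyperbolicReflection

section TensorLegs

variable {m A : Type*} [Fintype m] [DecidableEq m] [Ring A]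

/-- The flip `P` of two tensor factors, with entries in `A`. -/
def flipMatrix (m A : Type*) [DecidableEq m] [Ring A] : Matrix (m × m) (m × m) A :=
  Equiv.Perm.permMatrix A (Equiv.prodComm m m)

/-- `X ↦ X ⊗ 1`: a matrix acting on the first of two tensor factors. The entries of `X` need not
commute, so this is a block diagonal matrix rather than a Kronecker product. -/
def onFst (𝕜 m A : Type*) [CommRing 𝕜] [Fintype m] [DecidableEq m] [Ring A] [Algebra 𝕜 A] :
    Matrix m m A →ₐ[𝕜] Matrix (m × m) (m × m) A :=
  AlgHom.ofLinearMap
    { toFun := fun X => blockDiagonal fun _ => X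
      map_add' := fun X Y => blockDiagonal_add (fun _ => X) fun _ => Y
      map_smul' := fun c X => blockDiagonal_smul c fun _ => X }
    blockDiagonal_one
    fun X Y => blockDiagonal_mul (fun _ => X) fun _ => Y

lemma flipMatrix_mul (M : Matrix (m × m) (m × m) A) :
    flipMatrix m A * M = M.submatrix Prod.swap id :=
  PEquiv.toMatrix_toPEquiv_mul _ _

lemma mul_flipMatrix (M : Matrix (m × m) (m × m) A) :
    M * flipMatrix m A = M.submatrix id Prod.swap :=
  PEquiv.mul_toMatrix_toPEquiv _ _

lemma flipMatrix_mul_self : flipMatrix m A * flipMatrix m A = 1 := by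
  rw [flipMatrix_mul]
  ext p r
  simp [flipMatrix, PEquiv.toMatrix_apply, one_apply]

lemma flipMatrix_mul_mul_flipMatrix (M : Matrix (m × m) (m × m) A) :
    flipMatrix m A * M * flipMatrix m A = M.submatrix Prod.swap Prod.swap := by
  rw [flipMatrix_mul, mul_flipMatrix, submatrix_submatrix, Function.id_comp, Function.comp_id]

lemma reflection_of_braid_reflection {M : Type*} [Monoid M] {p r k r' k' : M} (hp : p * p = 1)
    (hbraid : r * k * r' * k' = k' * r' * k * r) :
    p * r * k * (r' * p) * (p * k' * p) = p * k' * p * (p * r') * k * (r * p) := by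
  calc p * r * k * (r' * p) * (p * k' * p)
      = p * (r * k * r' * (p * p) * k') * p := by simp only [mul_assoc]
    _ = p * (k' * (p * p) * r' * k * r) * p := by rw [hp, mul_one, mul_one, hbraid]
    _ = p * k' * p * (p * r') * k * (r * p) := by simp only [mul_assoc]

end TensorLegs

section TemperleyLieb

variable {𝕜 A : Type*} [Field 𝕜] [Ring A] [Algebra 𝕜 A]

/-- The coefficients of the vector `q ↑↓ - ↓↑` spanning the image of the Temperley–Lieb
generator. -/
def cup (A : Type*) [Ring A] [Algebra 𝕜 A] (q : 𝕜) (p : Fin 2 × Fin 2) : A :=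
  algebraMap 𝕜 A (!![0, q; -1, 0] p.1 p.2)

/-- The coefficients of the linear form `↑↓ ↦ 1`, `↓↑ ↦ -q⁻¹` whose kernel is that of the
Temperley–Lieb generator. -/
def cap (A : Type*) [Ring A] [Algebra 𝕜 A] (q : 𝕜) (p : Fin 2 × Fin 2) : A :=
  algebraMap 𝕜 A (!![0, 1; -q⁻¹, 0] p.1 p.2)

/-- The Temperley–Lieb generator on `𝕜² ⊗ 𝕜²`, with entries in `A`: on the span of `↑↓, ↓↑` its
matrix has rows `(q, -1)`, `(-1, q⁻¹)`, and it kills `↑↑` and `↓↓`. -/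
def temperleyLieb (A : Type*) [Ring A] [Algebra 𝕜 A] (q : 𝕜) :
    Matrix (Fin 2 × Fin 2) (Fin 2 × Fin 2) A :=
  vecMulVec (cup A q) (cap A q)

-- Capping off the first factor turns `X` into its quantum trace.
lemma cap_vecMul_onFst_dotProduct_cup (q : 𝕜) (X : Matrix (Fin 2) (Fin 2) A) :
    cap A q ᵥ* onFst 𝕜 (Fin 2) A X ⬝ᵥ cup A q = q • X 0 0 + q⁻¹ • X 1 1 := by
  simp [cap, cup, onFst, dotProduct, vecMul, blockDiagonal_apply, Fintype.sum_prod_type,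
    Fin.sum_univ_two, Algebra.smul_def, ← Algebra.commutes]

lemma temperleyLieb_mul_onFst_mul_temperleyLieb {q y : 𝕜} {X : Matrix (Fin 2) (Fin 2) A}
    (hX : q • X 0 0 + q⁻¹ • X 1 1 = y • 1) :
    temperleyLieb A q * onFst 𝕜 (Fin 2) A X * temperleyLieb A q = y • temperleyLieb A q := by
  rw [temperleyLieb, vecMulVec_mul, vecMulVec_mul_vecMulVec, cap_vecMul_onFst_dotProduct_cup, hX,
    smul_one_smul, vecMulVec_smul]

lemma temperleyLieb_mul_self (q : 𝕜) :
    temperleyLieb A q * temperleyLieb A q = (q + q⁻¹) • temperleyLieb A q := by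
  have htrace : q • (1 : Matrix (Fin 2) (Fin 2) A) 0 0 + q⁻¹ • (1 : Matrix (Fin 2) (Fin 2) A) 1 1
      = (q + q⁻¹) • 1 := by simp [add_smul]
  simpa using temperleyLieb_mul_onFst_mul_temperleyLieb htrace

end TemperleyLieb

section BlobMatrix

variable {R A : Type*} [CommRing R] [Ring A] [Algebra R A]

lemma fin_two_mul_self_of_intertwine {a a' : R} {s t f c : A} (hf : f * t = s * f)
    (hc : c * s = t * c) (hfc : f * c = (a • 1 - s) * (s - a' • 1))
    (hcf : c * f = (a • 1 - t) * (t - a' • 1)) :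
    !![a • 1 - s, f; c, t - a' • 1] * !![a • 1 - s, f; c, t - a' • 1]
      = (a - a') • !![a • 1 - s, f; c, t - a' • 1] := by
  have h₀₀ : (a • 1 - s) * (a • 1 - s) + f * c = (a - a') • (a • 1 - s) := by
    rw [hfc, ← mul_add, sub_add_sub_cancel, ← sub_smul, mul_smul_comm, mul_one]
  have h₀₁ : (a • 1 - s) * f + f * (t - a' • 1) = (a - a') • f := by
    rw [mul_sub, hf, sub_mul, smul_mul_assoc, one_mul, mul_smul_comm, mul_one]
    module
  have h₁₀ : c * (a • 1 - s) + (t - a' • 1) * c = (a - a') • c := by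
    rw [mul_sub, hc, sub_mul, smul_mul_assoc, one_mul, mul_smul_comm, mul_one]
    module
  have h₁₁ : c * f + (t - a' • 1) * (t - a' • 1) = (a - a') • (t - a' • 1) := by
    rw [hcf, ← add_mul, sub_add_sub_cancel, ← sub_smul, smul_mul_assoc, one_mul]
  rw [mul_fin_two, h₀₀, h₀₁, h₁₀, h₁₁]
  simp only [smul_of, smul_cons, smul_empty]

end BlobMatrix

section QuantumSl2

variable {𝕜 A : Type*} [Field 𝕜] [Ring A] [Algebra 𝕜 A]

/-- The relations of `U_q(sl₂)` for elements `E, F, K, K⁻¹` of an algebra in which the (rescaled)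
Casimir element acts by the scalar `a + a⁻¹`. Only the relations that bear on the blob
projector are recorded. -/
structure QuantumSl2Relations (q a : 𝕜) (E F K Kinv : A) : Prop where
  Kinv_mul_K : Kinv * K = 1
  F_mul_Kinv : F * Kinv = q⁻¹ ^ 2 • (Kinv * F)
  E_mul_Kinv : E * Kinv = q ^ 2 • (Kinv * E)
  sq_smul_F_mul_E : (q - q⁻¹) ^ 2 • (F * E) = (a + a⁻¹) • 1 - q • K - q⁻¹ • Kinv
  sq_smul_E_mul_F : (q - q⁻¹) ^ 2 • (E * F) = (a + a⁻¹) • 1 - q⁻¹ • K - q • Kinv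

/-- The blob projector `b` built from elements `E, F, K⁻¹` of an algebra, with `a` in the role of
`q^α`. -/
def blobMatrix (q a : 𝕜) (E F Kinv : A) : Matrix (Fin 2) (Fin 2) A :=
  (a - a⁻¹)⁻¹ •
    !![a • 1 - q⁻¹ • Kinv, (q - q⁻¹) • F;
      (q * (q - q⁻¹)) • (Kinv * E), q • Kinv - a⁻¹ • 1]

namespace QuantumSl2Relations

variable {q a : 𝕜} {E F K Kinv : A}

lemma smul_F_mul_Kinv_mul_E (H : QuantumSl2Relations q a E F K Kinv) (hq : q ≠ 0) (ha : a ≠ 0) :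
    (q * (q - q⁻¹) ^ 2) • (F * (Kinv * E))
      = (a • 1 - q⁻¹ • Kinv) * (q⁻¹ • Kinv - a⁻¹ • 1) := by
  calc (q * (q - q⁻¹) ^ 2) • (F * (Kinv * E))
      = q⁻¹ • (Kinv * ((q - q⁻¹) ^ 2 • (F * E))) := by
        rw [← mul_assoc, H.F_mul_Kinv, smul_mul_assoc, mul_smul_comm, mul_assoc]
        match_scalars
        field_simp
    _ = (a • 1 - q⁻¹ • Kinv) * (q⁻¹ • Kinv - a⁻¹ • 1) := by
        simp only [H.sq_smul_F_mul_E, mul_sub, sub_mul, smul_mul_assoc, mul_smul_comm, mul_one,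
          one_mul, H.Kinv_mul_K]
        match_scalars <;> field_simp
        ring

lemma smul_Kinv_mul_E_mul_F (H : QuantumSl2Relations q a E F K Kinv) (hq : q ≠ 0) (ha : a ≠ 0) :
    (q * (q - q⁻¹) ^ 2) • (Kinv * E * F)
      = (a • 1 - q • Kinv) * (q • Kinv - a⁻¹ • 1) := by
  rw [mul_smul, mul_assoc, ← mul_smul_comm, H.sq_smul_E_mul_F]
  simp only [mul_sub, sub_mul, smul_mul_assoc, mul_smul_comm, mul_one, one_mul, H.Kinv_mul_K]
  match_scalars <;> field_simp
  ring

theorem isIdempotentElem_blobMatrix (H : QuantumSl2Relations q a E F K Kinv) (hq : q ≠ 0)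
    (ha : a - a⁻¹ ≠ 0) : IsIdempotentElem (blobMatrix q a E F Kinv) := by
  have ha₀ : a ≠ 0 := by
    rintro rfl
    simp at ha
  have hf : ((q - q⁻¹) • F) * (q • Kinv) = (q⁻¹ • Kinv) * ((q - q⁻¹) • F) := by
    simp only [smul_mul_smul_comm, H.F_mul_Kinv]
    match_scalars
    field_simp
  have hc : ((q * (q - q⁻¹)) • (Kinv * E)) * (q⁻¹ • Kinv)
      = (q • Kinv) * ((q * (q - q⁻¹)) • (Kinv * E)) := by
    rw [smul_mul_smul_comm, smul_mul_smul_comm, mul_assoc Kinv E Kinv, H.E_mul_Kinv, mul_smul_comm]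
    match_scalars
    field_simp
  have hfc : ((q - q⁻¹) • F) * ((q * (q - q⁻¹)) • (Kinv * E))
      = (a • 1 - q⁻¹ • Kinv) * (q⁻¹ • Kinv - a⁻¹ • 1) := by
    rw [← H.smul_F_mul_Kinv_mul_E hq ha₀, smul_mul_smul_comm]
    ring_nf
  have hcf : ((q * (q - q⁻¹)) • (Kinv * E)) * ((q - q⁻¹) • F)
      = (a • 1 - q • Kinv) * (q • Kinv - a⁻¹ • 1) := by
    rw [← H.smul_Kinv_mul_E_mul_F hq ha₀, smul_mul_smul_comm]
    ring_nf
  rw [IsIdempotentElem, blobMatrix, smul_mul_smul_comm,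
    fin_two_mul_self_of_intertwine hf hc hfc hcf, smul_smul, inv_mul_cancel_right₀ ha]

end QuantumSl2Relations

lemma quantumTrace_blobMatrix {q : 𝕜} (hq : q ≠ 0) (a : 𝕜) (E F Kinv : A) :
    q • blobMatrix q a E F Kinv 0 0 + q⁻¹ • blobMatrix q a E F Kinv 1 1
      = ((a * q - (a * q)⁻¹) / (a - a⁻¹)) • 1 := by
  simp only [blobMatrix, Matrix.smul_apply, of_apply, cons_val', cons_val_zero, cons_val_one,
    cons_val_fin_one]
  match_scalars <;> field_simp <;> ring

end QuantumSl2

section ReflectionOperators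

variable {A : Type*} [Ring A] [Algebra ℂ A]

lemma Rsc_map_eq_flipMatrix_mul (h w : ℂ) :
    (Rsc h w).map (· • (1 : A))
      = flipMatrix (Fin 2) A * baxterizedR h w (temperleyLieb A (exp h)) := by
  have hup : sinh h * exp w = sinh (w + h) - sinh w * (exp h)⁻¹ := by
    rw [← exp_neg]
    simp only [sinh, neg_add, exp_add]
    ring
  have hdown : sinh h * exp (-w) = sinh (w + h) - sinh w * exp h := by
    simp only [sinh, neg_add, exp_add]
    ring
  rw [flipMatrix_mul]
  ext ⟨i, j⟩ ⟨k, l⟩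
  fin_cases i <;> fin_cases j <;> fin_cases k <;> fin_cases l <;>
    simp [Rsc, baxterizedR, temperleyLieb, cup, cap, vecMulVec_apply, hup, hdown,
      Algebra.algebraMap_eq_smul_one, sub_smul, smul_smul]

lemma Rsc_map_submatrix_swap (h w : ℂ) :
    ((Rsc h w).map (· • (1 : A))).submatrix Prod.swap Prod.swap
      = baxterizedR h w (temperleyLieb A (exp h)) * flipMatrix (Fin 2) A := by
  rw [← flipMatrix_mul_mul_flipMatrix, Rsc_map_eq_flipMatrix_mul, ← mul_assoc,
    flipMatrix_mul_self, one_mul]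

lemma map_baxterizedK {B : Type*} [Ring B] [Algebra ℂ B] (φ : A →ₐ[ℂ] B) (m ω u : ℂ) (b : A) :
    φ (baxterizedK m ω u b) = baxterizedK m ω u (φ b) := by
  simp only [baxterizedK, map_sub, map_add, map_smul, map_one]

end ReflectionOperators

section Verma

lemma ladderOp_ket (t : ℕ → Verma) (n : ℕ) : ladderOp t (ket n) = t n := by
  simp [ladderOp, ket]

lemma Verma.end_ext {f g : Module.End ℂ Verma} (hfg : ∀ n, f (ket n) = g (ket n)) : f = g :=
  Finsupp.lhom_ext' fun n => LinearMap.ext_ring (hfg n)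

@[simp]
lemma Fop_ket (n : ℕ) : Fop (ket n) = ket (n + 1) :=
  ladderOp_ket _ n

@[simp]
lemma Kop_ket (h α : ℂ) (n : ℕ) : Kop h α (ket n) = exp (h * (α - 1 - 2 * n)) • ket n :=
  ladderOp_ket _ n

@[simp]
lemma Kinv_ket (h α : ℂ) (n : ℕ) : Kinv h α (ket n) = exp (-(h * (α - 1 - 2 * n))) • ket n :=
  ladderOp_ket _ n

@[simp]
lemma Eop_ket_zero (h α : ℂ) : Eop h α (ket 0) = 0 :=
  ladderOp_ket _ 0

@[simp]
lemma Eop_ket_succ (h α : ℂ) (n : ℕ) :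
    Eop h α (ket (n + 1)) = (qnum h (n + 1) * qnum h (α - (n + 1))) • ket n := by
  simp [Eop, ladderOp_ket]

lemma Kinv_mul_Kop (h α : ℂ) : Kinv h α * Kop h α = 1 :=
  Verma.end_ext fun n => by simp [smul_smul, ← exp_add]

lemma Fop_mul_Kinv (h α : ℂ) : Fop * Kinv h α = exp (-(2 * h)) • (Kinv h α * Fop) := by
  refine Verma.end_ext fun n => ?_
  simp only [Module.End.mul_apply, LinearMap.smul_apply, Fop_ket, Kinv_ket, map_smul, smul_smul,
    ← exp_add]
  congr 2
  push_cast
  ring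

lemma Eop_mul_Kinv (h α : ℂ) : Eop h α * Kinv h α = exp (2 * h) • (Kinv h α * Eop h α) := by
  refine Verma.end_ext fun n => ?_
  cases n with
  | zero => simp
  | succ n =>
    have hexp : exp (-(h * (α - 1 - 2 * (n + 1 : ℕ))))
        = exp (2 * h) * exp (-(h * (α - 1 - 2 * n))) := by
      rw [← exp_add]
      push_cast
      ring_nf
    simp only [Module.End.mul_apply, LinearMap.smul_apply, Eop_ket_succ, Kinv_ket, map_smul,
      smul_smul, hexp]
    ring_nf

lemma exp_sub_exp_neg_ne_zero {h : ℂ} (hq : exp h ^ 2 ≠ 1) : exp h - exp (-h) ≠ 0 := by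
  contrapose! hq
  rw [sub_eq_zero] at hq
  rw [sq]
  nth_rw 2 [hq]
  rw [← exp_add, add_neg_cancel, exp_zero]

lemma qnum_zero (h : ℂ) : qnum h 0 = 0 := by
  simp [qnum]

lemma sq_mul_qnum_mul_qnum {h : ℂ} (hq : exp h ^ 2 ≠ 1) (x y : ℂ) :
    (exp h - exp (-h)) ^ 2 * (qnum h x * qnum h y)
      = exp (h * (x + y)) + exp (-(h * (x + y))) - exp (h * (y - x)) - exp (-(h * (y - x))) := by
  have hd := exp_sub_exp_neg_ne_zero hq
  rw [qnum, qnum, div_mul_div_comm, ← sq, mul_div_cancel₀ _ (pow_ne_zero 2 hd)]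
  simp only [mul_add, mul_neg, neg_add, neg_neg, sub_eq_add_neg, exp_add]
  ring

lemma Fop_mul_Eop_ket (h α : ℂ) (n : ℕ) :
    (Fop * Eop h α) (ket n) = (qnum h n * qnum h (α - n)) • ket n := by
  cases n <;> simp [qnum_zero]

lemma Eop_mul_Fop_ket (h α : ℂ) (n : ℕ) :
    (Eop h α * Fop) (ket n) = (qnum h (n + 1) * qnum h (α - (n + 1))) • ket n := by
  simp

-- This and `sq_smul_Eop_mul_Fop` express that the Casimir element acts by `q^α + q^{-α}`.
lemma sq_smul_Fop_mul_Eop {h : ℂ} (hq : exp h ^ 2 ≠ 1) (α : ℂ) :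
    (exp h - exp (-h)) ^ 2 • (Fop * Eop h α)
      = (exp (h * α) + exp (-(h * α))) • 1 - exp h • Kop h α - exp (-h) • Kinv h α := by
  refine Verma.end_ext fun n => ?_
  rw [LinearMap.smul_apply, Fop_mul_Eop_ket, smul_smul, sq_mul_qnum_mul_qnum hq]
  simp only [LinearMap.sub_apply, LinearMap.smul_apply, Module.End.one_apply, Kop_ket, Kinv_ket,
    smul_smul, ← sub_smul, ← exp_add]
  congr 5 <;> ring_nf

lemma sq_smul_Eop_mul_Fop {h : ℂ} (hq : exp h ^ 2 ≠ 1) (α : ℂ) :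
    (exp h - exp (-h)) ^ 2 • (Eop h α * Fop)
      = (exp (h * α) + exp (-(h * α))) • 1 - exp (-h) • Kop h α - exp h • Kinv h α := by
  refine Verma.end_ext fun n => ?_
  rw [LinearMap.smul_apply, Eop_mul_Fop_ket, smul_smul, sq_mul_qnum_mul_qnum hq]
  simp only [LinearMap.sub_apply, LinearMap.smul_apply, Module.End.one_apply, Kop_ket, Kinv_ket,
    smul_smul, ← sub_smul, ← exp_add]
  congr 5 <;> ring_nf

lemma quantumSl2Relations_Verma {h : ℂ} (hq : exp h ^ 2 ≠ 1) (α : ℂ) :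
    QuantumSl2Relations (exp h) (exp (h * α)) (Eop h α) Fop (Kop h α) (Kinv h α) where
  Kinv_mul_K := Kinv_mul_Kop h α
  F_mul_Kinv := by
    rw [Fop_mul_Kinv, ← exp_neg, ← exp_nat_mul]
    simp
  E_mul_Kinv := by
    rw [Eop_mul_Kinv, ← exp_nat_mul]
    simp
  sq_smul_F_mul_E := by simpa only [exp_neg] using sq_smul_Fop_mul_Eop hq α
  sq_smul_E_mul_F := by simpa only [exp_neg] using sq_smul_Eop_mul_Fop hq α

lemma bPlus_eq_blobMatrix (h α : ℂ) :
    bPlus h α = blobMatrix (exp h) (exp (h * α)) (Eop h α) Fop (Kinv h α) := by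
  have hneg : -exp (-h) • Kinv h α + exp (h * α) • 1 = exp (h * α) • 1 - exp (-h) • Kinv h α := by
    module
  rw [bPlus, hneg, blobMatrix, exp_neg, exp_neg]

end Verma

section SpinChain

lemma Rab_eq_flipMatrix_mul (h w : ℂ) :
    Rab h w = flipMatrix (Fin 2) _ * baxterizedR h w (temperleyLieb _ (exp h)) :=
  Rsc_map_eq_flipMatrix_mul (A := Module.End ℂ Verma) h w

lemma Rba_eq_mul_flipMatrix (h w : ℂ) :
    Rba h w = baxterizedR h w (temperleyLieb _ (exp h)) * flipMatrix (Fin 2) _ :=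
  Rsc_map_submatrix_swap (A := Module.End ℂ Verma) h w

lemma Ka_eq_onFst_Kblob (h α μ u : ℂ) :
    Ka h α μ u = onFst ℂ (Fin 2) (Module.End ℂ Verma) (Kblob h α μ u) :=
  rfl

lemma Kblob_eq_baxterizedK (h α μ u : ℂ) :
    Kblob h α μ u = baxterizedK (μ / (sinh h * sinh (h * α))) (h * α) u (bPlus h α) :=
  rfl

lemma Ka_eq_baxterizedK (h α μ u : ℂ) :
    Ka h α μ u = baxterizedK (μ / (sinh h * sinh (h * α))) (h * α) u
      (onFst ℂ (Fin 2) (Module.End ℂ Verma) (bPlus h α)) := by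
  rw [Ka_eq_onFst_Kblob, Kblob_eq_baxterizedK]
  exact map_baxterizedK (A := Op2) (B := Op4) (onFst ℂ (Fin 2) (Module.End ℂ Verma)) _ _ _ _

lemma Kb_eq_flipMatrix_mul_Ka_mul_flipMatrix (h α μ v : ℂ) :
    Kb h α μ v = flipMatrix (Fin 2) _ * Ka h α μ v * flipMatrix (Fin 2) _ :=
  (flipMatrix_mul_mul_flipMatrix (Ka h α μ v)).symm

lemma isIdempotentElem_bPlus {h α : ℂ} (hq : exp h ^ 2 ≠ 1)
    (hα : exp (h * α) ≠ exp (-(h * α))) : IsIdempotentElem (bPlus h α) := by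
  rw [exp_neg] at hα
  rw [bPlus_eq_blobMatrix]
  exact (quantumSl2Relations_Verma hq α).isIdempotentElem_blobMatrix (exp_ne_zero h)
    (sub_ne_zero.mpr hα)

lemma quantumTrace_bPlus (h α : ℂ) :
    exp h • bPlus h α 0 0 + (exp h)⁻¹ • bPlus h α 1 1
      = (sinh (h * α + h) / sinh (h * α)) • 1 := by
  have hsinh : sinh (h * α + h) / sinh (h * α)
      = (exp (h * α) * exp h - (exp (h * α) * exp h)⁻¹) / (exp (h * α) - (exp (h * α))⁻¹) := by
    rw [sinh, sinh, div_div_div_cancel_right₀ two_ne_zero, exp_neg, exp_neg,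
      exp_add]
  rw [bPlus_eq_blobMatrix, hsinh]
  exact quantumTrace_blobMatrix (exp_ne_zero h) _ _ _ _

end SpinChain

/-- The blob K-matrix solves the boundary Yang–Baxter (reflection) equation on
`ℂ²_a ⊗ ℂ²_b ⊗ V_α`. -/
theorem blob_K_matrix_reflection_equation (h α μ : ℂ) (hq : Complex.exp h ^ 2 ≠ 1)
    (hα : Complex.exp (h * α) ≠ Complex.exp (-(h * α))) :
    ∀ u v : ℂ,
      Rab h (u - v) * Ka h α μ u * Rba h (u + v) * Kb h α μ v
        = Kb h α μ v * Rab h (u + v) * Ka h α μ u * Rba h (u - v) := by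
  intro u v
  have hω : sinh (h * α) ≠ 0 := by
    rw [sinh]
    exact div_ne_zero (sub_ne_zero.mpr hα) two_ne_zero
  have he := temperleyLieb_mul_self (A := Module.End ℂ Verma) (exp h)
  rw [← exp_neg, ← two_cosh] at he
  have hb := (isIdempotentElem_bPlus hq hα).map (onFst ℂ (Fin 2) _)
  have hebe := temperleyLieb_mul_onFst_mul_temperleyLieb (A := Module.End ℂ Verma)
    (quantumTrace_bPlus h α)
  simp only [Rab_eq_flipMatrix_mul, Rba_eq_mul_flipMatrix,
    Kb_eq_flipMatrix_mul_Ka_mul_flipMatrix, Ka_eq_baxterizedK]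
  exact reflection_of_braid_reflection flipMatrix_mul_self
    (baxterized_reflection hω he hb hebe _ u v)
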